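/- Let G = {(A, B) ∈ GL₂(ℤ/3ℤ) × GL₂(ℤ/3ℤ) : det A = det B}. Then G has exactly 1152 elements, and exactly 927 pairs (A, B) ∈ G are such that A satisfies condition (H) or B satisfies condition (H); in particular, the proportion of such pairs in G is 103/128. -/

import Mathlib

/-- Condition (H) on a matrix `A ∈ GL₂(ℤ/3ℤ)`: letting `f(A)` be the multiplicative order of
`det A`, the eigenvalues `α, β` of `A` satisfy `α ^ f(A) + β ^ f(A) ≠ 2`; equivalently (since
`det(A) ^ f(A) = 1`), the matrix `A ^ f(A) - 1` is invertible. -/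
def CondH (A : Matrix (Fin 2) (Fin 2) (ZMod 3)) : Prop :=
  IsUnit (A ^ orderOf A.det - 1)

/-- The set `G = {(A, B) ∈ GL₂(ℤ/3ℤ)² : det A = det B}`. -/
def Gpairs : Set (GL (Fin 2) (ZMod 3) × GL (Fin 2) (ZMod 3)) :=
  {p | (p.1 : Matrix (Fin 2) (Fin 2) (ZMod 3)).det =
    (p.2 : Matrix (Fin 2) (Fin 2) (ZMod 3)).det}

/-!
For `A ∈ GL₂(𝔽₃)` condition (H) says that `1` is not an eigenvalue of `A`: this is its definition
when `det A = 1`, and when `det A = -1` one has `A ^ 2 - 1 = (A - 1) * (A + 1)`, where the factors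
have determinants `-tr A` and `tr A`. It is easier to count the pairs in which both matrices
violate (H), separately for each value of the common determinant.

Over `𝔽_q`, a `2 × 2` matrix of determinant `d` has eigenvalue `1` iff its trace is `1 + d`, that
is, iff its characteristic polynomial is `(X - 1) * (X - d)`. There are `q ^ 2` such matrices when
`d = 1` and `q ^ 2 + q` otherwise, so for `q = 3` the pairs violating (H) number
`9 ^ 2 + 12 ^ 2 = 225`. The pairs with equal determinants number `48 ^ 2 / 2 = 1152`, as the
determinant maps the `48` elements of `GL₂(𝔽₃)` onto a group of order `2`.
-/

open Matrix

theorem card_pairs_map_eq_mul_card {G H : Type*} [Group G] [Group H] {f : G →* H}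
    (hf : Function.Surjective f) :
    Nat.card {p : G × G // f p.1 = f p.2} * Nat.card H = Nat.card G ^ 2 := by
  let e : {p : G × G // f p.1 = f p.2} ≃ G × f.ker :=
    { toFun := fun p ↦ ⟨p.1.1, p.1.1⁻¹ * p.1.2, by simp [f.mem_ker, p.2]⟩
      invFun := fun x ↦ ⟨(x.1, x.1 * x.2), by simp [f.mem_ker.mp x.2.2]⟩
      left_inv := fun p ↦ by simp
      right_inv := fun x ↦ by simp }
  have card_ker_mul : Nat.card f.ker * Nat.card H = Nat.card G := by
    rw [← f.ker.card_mul_index, Subgroup.index_ker, f.range_eq_top_of_surjective hf,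
      Subgroup.card_top]
  rw [Nat.card_congr e, Nat.card_prod, mul_assoc, card_ker_mul, sq]

theorem card_pairs_map_eq_and {α β : Type*} [Finite α] [Fintype β] (f : α → β) (P : α → Prop) :
    Nat.card {p : α × α // f p.1 = f p.2 ∧ P p.1 ∧ P p.2} =
      ∑ b, Nat.card {a // f a = b ∧ P a} ^ 2 := by
  let e : {p : α × α // f p.1 = f p.2 ∧ P p.1 ∧ P p.2} ≃
      Σ b, {a // f a = b ∧ P a} × {a // f a = b ∧ P a} :=
    { toFun := fun p ↦ ⟨f p.1.2, ⟨p.1.1, p.2.1, p.2.2.1⟩, ⟨p.1.2, rfl, p.2.2.2⟩⟩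
      invFun := fun x ↦ ⟨(x.2.1, x.2.2), x.2.1.2.1.trans x.2.2.2.1.symm, x.2.1.2.2, x.2.2.2.2⟩
      left_inv := fun _ ↦ rfl
      right_inv := by
        rintro ⟨_, ⟨a, ha, hPa⟩, ⟨b, rfl, hPb⟩⟩
        rfl }
  simp only [Nat.card_congr e, Nat.card_sigma, Nat.card_prod, sq]

theorem card_generalLinearGroup_det_eq_and {n R : Type*} [Fintype n] [DecidableEq n]
    [CommRing R] (d : Rˣ) (P : Matrix n n R → Prop) :
    Nat.card {A : GL n R // A.det = d ∧ P A} =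
      Nat.card {A : Matrix n n R // A.det = d ∧ P A} :=
  Nat.card_congr
    { toFun := fun A ↦ ⟨A.1, congrArg Units.val A.2.1, A.2.2⟩
      invFun := fun A ↦
        ⟨GeneralLinearGroup.mk'' A.1 (A.2.1.symm ▸ d.isUnit), Units.ext A.2.1, A.2.2⟩
      left_inv := fun _ ↦ Subtype.ext (Units.ext rfl)
      right_inv := fun _ ↦ rfl }

theorem det_add_smul_one_fin_two {R : Type*} [CommRing R] (A : Matrix (Fin 2) (Fin 2) R) (r : R) :
    (A + r • 1).det = r ^ 2 + r * A.trace + A.det := by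
  simp only [det_fin_two, trace_fin_two, Matrix.add_apply, Matrix.smul_apply, one_apply_eq,
    one_apply_ne zero_ne_one, one_apply_ne one_ne_zero, smul_eq_mul]
  ring

theorem det_sub_one_fin_two {R : Type*} [CommRing R] (A : Matrix (Fin 2) (Fin 2) R) :
    (A - 1).det = 1 - A.trace + A.det := by
  rw [show A - 1 = A + (-1 : R) • 1 by module, det_add_smul_one_fin_two]
  ring

theorem isUnit_sub_one_iff_trace_ne {K : Type*} [Field K] {A : Matrix (Fin 2) (Fin 2) K} :
    IsUnit (A - 1) ↔ A.trace ≠ 1 + A.det := by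
  rw [isUnit_iff_isUnit_det, isUnit_iff_ne_zero, det_sub_one_fin_two, sub_add_eq_add_sub,
    sub_ne_zero, ne_comm]

theorem isUnit_sq_sub_one_iff_of_det_eq_neg_one {R : Type*} [CommRing R]
    {A : Matrix (Fin 2) (Fin 2) R} (hA : A.det = -1) :
    IsUnit (A ^ 2 - 1) ↔ IsUnit (A - 1) := by
  have det_sub : (A - 1).det = -A.trace := by rw [det_sub_one_fin_two, hA]; ring
  have det_add : (A + 1).det = A.trace := by
    rw [← one_smul R (1 : Matrix (Fin 2) (Fin 2) R), det_add_smul_one_fin_two, hA]; ring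
  have factorization : A ^ 2 - 1 = (A - 1) * (A + 1) := by noncomm_ring
  simp only [isUnit_iff_isUnit_det, factorization, det_sub, det_add, IsUnit.mul_iff,
    IsUnit.neg_iff, and_self]

theorem condH_iff_isUnit_sub_one (A : GL (Fin 2) (ZMod 3)) :
    CondH A ↔ IsUnit (A.val - 1) := by
  have det_eq : A.val.det = 1 ∨ A.val.det = -1 :=
    (by decide : ∀ d : ZMod 3, d ≠ 0 → d = 1 ∨ d = -1) _ A.det_ne_zero
  have orderOf_neg_one : orderOf (-1 : ZMod 3) = 2 := orderOf_eq_prime (by decide) (by decide)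
  unfold CondH
  rcases det_eq with h | h
  · rw [h, orderOf_one, pow_one]
  · rw [h, orderOf_neg_one, isUnit_sq_sub_one_iff_of_det_eq_neg_one h]

theorem card_pairs_mul_eq {M₀ : Type*} [GroupWithZero M₀] [Finite M₀] [DecidableEq M₀] (e : M₀) :
    Nat.card {p : M₀ × M₀ // p.1 * p.2 = e} =
      Nat.card M₀ - 1 + if e = 0 then Nat.card M₀ else 0 := by
  have := Fintype.ofFinite M₀
  have card_of_ne_zero (b : M₀) (hb : b ≠ 0) : Nat.card {c // b * c = e} = 1 := by
    simp [← eq_inv_mul_iff_mul_eq₀ hb]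
  have card_of_zero : Nat.card {c : M₀ // 0 * c = e} = if e = 0 then Nat.card M₀ else 0 := by
    split_ifs with he
    · simp [he]
    · simp [Ne.symm he]
  rw [Nat.card_congr (Equiv.subtypeProdEquivSigmaSubtype fun b c : M₀ ↦ b * c = e), Nat.card_sigma,
    Fintype.sum_eq_add_sum_compl 0, card_of_zero, add_comm,
    Finset.sum_congr rfl fun b hb ↦ card_of_ne_zero b (by simpa using hb)]
  simp [Finset.card_compl]

/-- The `2 × 2` matrices of trace `t` and determinant `d`, parametrised by the upper left entry `a`
and the two off-diagonal entries, whose product has to be `a * (t - a) - d`. -/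
def matrixFinTwoTraceDetEquiv {R : Type*} [CommRing R] (t d : R) :
    {A : Matrix (Fin 2) (Fin 2) R // A.trace = t ∧ A.det = d} ≃
      Σ a : R, {p : R × R // p.1 * p.2 = a * (t - a) - d} where
  toFun A := ⟨A.1 0 0, (A.1 0 1, A.1 1 0), by
    have trace_eq : A.1 0 0 + A.1 1 1 = t := A.1.trace_fin_two ▸ A.2.1
    have det_eq : A.1 0 0 * A.1 1 1 - A.1 0 1 * A.1 1 0 = d := A.1.det_fin_two ▸ A.2.2
    linear_combination A.1 0 0 * trace_eq - det_eq⟩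
  invFun x := ⟨!![x.1, x.2.1.1; x.2.1.2, t - x.1], by
    rw [trace_fin_two_of, det_fin_two_of, x.2.2]
    exact ⟨add_sub_cancel _ _, sub_sub_cancel _ _⟩⟩
  left_inv := by
    rintro ⟨A, rfl, rfl⟩
    simp only [trace_fin_two, add_sub_cancel_left, ← eta_fin_two]
  right_inv _ := rfl

section FiniteField

variable {K : Type*} [Field K] [Finite K]

theorem card_matrix_fin_two_trace_eq_det_eq (t d : K) :
    Nat.card {A : Matrix (Fin 2) (Fin 2) K // A.trace = t ∧ A.det = d} =
      Nat.card K * (Nat.card K - 1) + {x : K | x * (t - x) = d}.ncard * Nat.card K := by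
  classical
  have := Fintype.ofFinite K
  have ncard_roots : {x : K | x * (t - x) = d}.ncard =
      (Finset.univ.filter fun x : K ↦ x * (t - x) = d).card := by
    rw [← Set.ncard_coe_finset, Finset.coe_filter_univ]
  simp only [Nat.card_congr (matrixFinTwoTraceDetEquiv t d), Nat.card_sigma, card_pairs_mul_eq,
    sub_eq_zero]
  rw [Finset.sum_add_distrib, ← Finset.sum_filter, Finset.sum_const, Finset.sum_const,
    Finset.card_univ, ncard_roots, smul_eq_mul, smul_eq_mul, Nat.card_eq_fintype_card]

theorem card_det_eq_and_not_isUnit_sub_one [DecidableEq K] (d : K) :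
    Nat.card {A : Matrix (Fin 2) (Fin 2) K // A.det = d ∧ ¬IsUnit (A - 1)} =
      if d = 1 then Nat.card K ^ 2 else Nat.card K ^ 2 + Nat.card K := by
  have not_isUnit_iff (A : Matrix (Fin 2) (Fin 2) K) :
      A.det = d ∧ ¬IsUnit (A - 1) ↔ A.trace = 1 + d ∧ A.det = d := by
    rw [isUnit_sub_one_iff_trace_ne, not_not]
    grind
  have roots_eq : {x : K | x * (1 + d - x) = d} = {1, d} := by
    ext x
    change x * (1 + d - x) = d ↔ x = 1 ∨ x = d
    rw [← sub_eq_zero, show x * (1 + d - x) - d = (x - 1) * (d - x) by ring, mul_eq_zero,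
      sub_eq_zero, sub_eq_zero, eq_comm (a := d)]
  obtain ⟨r, hr⟩ : ∃ r, Nat.card K = r + 1 := Nat.exists_eq_add_one.mpr Nat.card_pos
  simp only [not_isUnit_iff, card_matrix_fin_two_trace_eq_det_eq, roots_eq, hr, Nat.add_sub_cancel]
  split_ifs with hd
  · rw [hd, Set.pair_eq_singleton, Set.ncard_singleton]
    ring
  · rw [Set.ncard_pair (Ne.symm hd)]
    ring

theorem card_pairs_det_eq_and_not_isUnit_sub_one :
    Nat.card {p : GL (Fin 2) K × GL (Fin 2) K //
      p.1.det = p.2.det ∧ ¬IsUnit (p.1.val - 1) ∧ ¬IsUnit (p.2.val - 1)} =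
      Nat.card K ^ 4 + (Nat.card K - 2) * (Nat.card K ^ 2 + Nat.card K) ^ 2 := by
  classical
  have := Fintype.ofFinite K
  simp only [
    card_pairs_map_eq_and GeneralLinearGroup.det fun A : GL (Fin 2) K ↦ ¬IsUnit (A.val - 1),
    card_generalLinearGroup_det_eq_and _ fun A : Matrix (Fin 2) (Fin 2) K ↦ ¬IsUnit (A - 1),
    card_det_eq_and_not_isUnit_sub_one, Units.val_eq_one]
  rw [Fintype.sum_eq_add_sum_compl 1, if_pos rfl,
    Finset.sum_congr rfl fun d hd ↦ by rw [if_neg (by simpa using hd)]]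
  simp [Finset.card_compl, Fintype.card_units, Nat.sub_sub, ← pow_mul]

end FiniteField

theorem mem_Gpairs_iff {p : GL (Fin 2) (ZMod 3) × GL (Fin 2) (ZMod 3)} :
    p ∈ Gpairs ↔ p.1.det = p.2.det :=
  (Units.ext_iff (u := p.1.det) (v := p.2.det)).symm

theorem card_Gpairs : Nat.card Gpairs = 1152 := by
  have card_GL : Nat.card (GL (Fin 2) (ZMod 3)) = 48 := by
    rw [card_GL_field, ZMod.card, Fin.prod_univ_two]
    norm_num
  have card_mul_two : Nat.card Gpairs * 2 = 48 ^ 2 := by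
    have h := card_pairs_map_eq_mul_card
      (GeneralLinearGroup.det_surjective (n := Fin 2) (R := ZMod 3))
    simpa only [← mem_Gpairs_iff, card_GL, Nat.card_units, Nat.card_zmod] using h
  lia

theorem card_Gpairs_not_condH :
    Nat.card {p : GL (Fin 2) (ZMod 3) × GL (Fin 2) (ZMod 3) //
      p ∈ Gpairs ∧ ¬(CondH p.1 ∨ CondH p.2)} = 225 := by
  simp only [mem_Gpairs_iff, condH_iff_isUnit_sub_one, not_or,
    card_pairs_det_eq_and_not_isUnit_sub_one, Nat.card_zmod]
  norm_num

theorem card_Gpairs_condH :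
    Nat.card {p : GL (Fin 2) (ZMod 3) × GL (Fin 2) (ZMod 3) //
      p ∈ Gpairs ∧ (CondH p.1 ∨ CondH p.2)} = 927 := by
  have ncard_add := Set.ncard_inter_add_ncard_sdiff_eq_ncard Gpairs {p | CondH p.1 ∨ CondH p.2}
    Gpairs.toFinite
  have ncard_not_condH : (Gpairs \ {p | CondH p.1 ∨ CondH p.2}).ncard = 225 := card_Gpairs_not_condH
  rw [ncard_not_condH, show Gpairs.ncard = 1152 from card_Gpairs] at ncard_add
  exact Nat.add_right_cancel ncard_add

/-- The group `G = {(A, B) ∈ GL₂(ℤ/3ℤ)² : det A = det B}` has exactly `1152` elements, and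
exactly `927` pairs `(A, B) ∈ G` are such that `A` or `B` satisfies condition (H); in
particular the proportion of such pairs in `G` is `103/128`. -/
theorem card_pairs_GL2_ZMod3_condH :
    Nat.card Gpairs = 1152 ∧
    Nat.card {p : GL (Fin 2) (ZMod 3) × GL (Fin 2) (ZMod 3) //
      p ∈ Gpairs ∧
      (CondH (p.1 : Matrix (Fin 2) (Fin 2) (ZMod 3)) ∨
        CondH (p.2 : Matrix (Fin 2) (Fin 2) (ZMod 3)))} = 927 ∧
    (Nat.card {p : GL (Fin 2) (ZMod 3) × GL (Fin 2) (ZMod 3) //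
      p ∈ Gpairs ∧
      (CondH (p.1 : Matrix (Fin 2) (Fin 2) (ZMod 3)) ∨
        CondH (p.2 : Matrix (Fin 2) (Fin 2) (ZMod 3)))} : ℚ) /
      (Nat.card Gpairs : ℚ) = 103 / 128 := by
  rw [card_Gpairs_condH, card_Gpairs]
  norm_num
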